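/- arXiv:math/0610326 — 2 statements merged into one kernel-verified Lean document; each statement's English description precedes it below -/
import Mathlib

section
/- Assume a := ess sup ξ₀ < ∞ and that there exist α ∈ (0,2) and λ₀ > 0 such that Q{ξ₀⁻ > λ} ≥ 1/(log λ)^{α} for all λ ≥ λ₀. Then for every ε' > 0, ℙ⊗Q-almost surely, lim_{n→∞} n^{−2/α+ε'} Z_n = −∞. -/
open MeasureTheory ProbabilityTheory Filter Set

/-- Nearest-neighbour transition probability of Sinai's walk: from `x`, a step `s`
has probability `p` if `s = 1`, `1 − p` if `s = −1`, and `0` otherwise, where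
`p = ω_x` is the environment at the current site. -/
noncomputable def stepProb (p : ℝ) (s : ℤ) : ℝ :=
  if s = 1 then p else if s = -1 then 1 - p else 0

/-!
The oscillations of the potential over a window of width `k ^ β` have order `k ^ (β / 2)`, which is
negligible compared with `k` when `β < 2`. The expected time the walk needs to exit the window
`(-k ^ β, k ^ β)` is therefore at most `exp (k / 2)` up to a polynomial factor, so that the walk
exits it before time `2 ^ k` and visits every site of one of its two halves. If `θ * α < β`,
then among the `k ^ β` sites of each half at least one carries a scenery value below
`-exp (2 * k ^ θ)`, since each site does so with probability at least a constant times
`k ^ (-θ * α)`. By Borel–Cantelli all of this holds for all large `k`, and for `θ > 1` a single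
visit to such a site outweighs the at most `n * |a|` contributed by the other visits up to time
`n`, which leaves `Z_n ≤ -exp ((log n) ^ θ)`.
-/

/-! ### Quenched exit times -/

/-- The increment `V(y) − V(z)` of Sinai's potential, in the environment `p`, between two sites
`z ≤ y`; it is `0` if `y < z`. -/
noncomputable def potentialDiff (p : ℤ → ℝ) (z y : ℤ) : ℝ :=
  ∑ w ∈ Finset.Ioc z y, Real.log ((1 - p w) / p w)

theorem potentialDiff_self (p : ℤ → ℝ) (z : ℤ) : potentialDiff p z z = 0 := by
  simp [potentialDiff]

theorem potentialDiff_eq_add_log (p : ℤ → ℝ) {z y : ℤ} (hzy : z < y) :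
    potentialDiff p z y = potentialDiff p z (y - 1) + Real.log ((1 - p y) / p y) := by
  rw [potentialDiff, ← Finset.insert_Ioc_sub_one_right_eq_Ioc hzy,
    Finset.sum_insert (by simp), add_comm, potentialDiff]

theorem measurable_potentialDiff (z y : ℤ) : Measurable fun p ↦ potentialDiff p z y := by
  unfold potentialDiff
  fun_prop

/-- The expected time to step from `y` to `y + 1` in the environment `p`, for the walk that is
sent back to `a + 1` at once whenever it reaches `a`. -/
noncomputable def crossingTime (p : ℤ → ℝ) (a y : ℤ) : ℝ :=
  ∑ z ∈ Finset.Ioc a y, Real.exp (potentialDiff p z y) / p z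

/-- The expected time to reach `b` from `x` in the environment `p`, for the walk that is sent back
to `a + 1` at once whenever it reaches `a`. -/
noncomputable def hittingTime (p : ℤ → ℝ) (a b x : ℤ) : ℝ :=
  ∑ y ∈ Finset.Ico x b, crossingTime p a y

section HittingTime

variable {p : ℤ → ℝ} {a b : ℤ}

theorem crossingTime_eq_mul_add {y : ℤ} (hay : a < y) (hp₀ : 0 < p y) (hp₁ : p y < 1) :
    crossingTime p a y = (1 - p y) / p y * crossingTime p a (y - 1) + 1 / p y := by
  have hodds : 0 < (1 - p y) / p y := div_pos (sub_pos.mpr hp₁) hp₀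
  rw [crossingTime, ← Finset.insert_Ioc_sub_one_right_eq_Ioc hay, Finset.sum_insert (by simp),
    potentialDiff_self, Real.exp_zero, add_comm, crossingTime, Finset.mul_sum]
  congr 1
  refine Finset.sum_congr rfl fun z hz ↦ ?_
  have hzy : z < y := by rw [Finset.mem_Ioc] at hz; omega
  rw [potentialDiff_eq_add_log p hzy, Real.exp_add, Real.exp_log hodds]
  ring

theorem crossingTime_nonneg (hp : ∀ x ∈ Finset.Ioo a b, 0 ≤ p x) {y : ℤ} (hy : y < b) :
    0 ≤ crossingTime p a y := by
  refine Finset.sum_nonneg fun z hz ↦ div_nonneg (Real.exp_nonneg _) (hp z ?_)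
  rw [Finset.mem_Ioc] at hz
  exact Finset.mem_Ioo.mpr ⟨hz.1, hz.2.trans_lt hy⟩

theorem hittingTime_nonneg (hp : ∀ x ∈ Finset.Ioo a b, 0 ≤ p x) (x : ℤ) :
    0 ≤ hittingTime p a b x :=
  Finset.sum_nonneg fun _ hy ↦ crossingTime_nonneg hp (Finset.mem_Ico.mp hy).2

theorem hittingTime_eq_crossingTime_add {x : ℤ} (hxb : x < b) :
    hittingTime p a b x = crossingTime p a x + hittingTime p a b (x + 1) := by
  rw [hittingTime, ← Finset.insert_Ico_add_one_left_eq_Ico hxb, Finset.sum_insert (by simp),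
    hittingTime]

theorem hittingTime_eq_one_add {x : ℤ} (hx : x ∈ Finset.Ioo a b) (hp₀ : 0 < p x) (hp₁ : p x < 1) :
    hittingTime p a b x =
      1 + (p x * hittingTime p a b (x + 1) + (1 - p x) * hittingTime p a b (x - 1)) := by
  obtain ⟨hax, hxb⟩ := Finset.mem_Ioo.mp hx
  have hright := hittingTime_eq_crossingTime_add (p := p) (a := a) hxb
  have hleft := hittingTime_eq_crossingTime_add (p := p) (a := a) (sub_one_lt x |>.trans hxb)
  have hcross : p x * crossingTime p a x = (1 - p x) * crossingTime p a (x - 1) + 1 := by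
    rw [crossingTime_eq_mul_add hax hp₀ hp₁]
    field_simp
  rw [sub_add_cancel] at hleft
  linear_combination hcross + (1 - p x) * (-hleft) + p x * hright

theorem crossingTime_le {δ B : ℝ} (hδ : 0 < δ) (hp : ∀ x ∈ Finset.Ioo a b, δ ≤ p x)
    {y : ℤ} (hay : a < y) (hyb : y < b) (hB : ∀ z ∈ Finset.Ioo a b, potentialDiff p z y ≤ B) :
    crossingTime p a y ≤ (b - a) * (Real.exp B / δ) := by
  have hterm : ∀ z ∈ Finset.Ioc a y, Real.exp (potentialDiff p z y) / p z ≤ Real.exp B / δ := by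
    intro z hz
    rw [Finset.mem_Ioc] at hz
    have hz' : z ∈ Finset.Ioo a b := Finset.mem_Ioo.mpr ⟨hz.1, hz.2.trans_lt hyb⟩
    exact div_le_div₀ (Real.exp_nonneg _) (Real.exp_le_exp.mpr (hB z hz')) hδ (hp z hz')
  have hcard : ((Finset.Ioc a y).card : ℝ) ≤ b - a := by
    rw [Int.card_Ioc]
    exact_mod_cast (by omega : ((y - a).toNat : ℤ) ≤ b - a)
  calc crossingTime p a y ≤ (Finset.Ioc a y).card • (Real.exp B / δ) :=
        Finset.sum_le_card_nsmul _ _ _ hterm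
    _ ≤ (b - a) * (Real.exp B / δ) := by
        rw [nsmul_eq_mul]
        gcongr

theorem hittingTime_le {δ B : ℝ} (hδ : 0 < δ) (hp : ∀ x ∈ Finset.Ioo a b, δ ≤ p x)
    (hB : ∀ z ∈ Finset.Ioo a b, ∀ y ∈ Finset.Ioo a b, potentialDiff p z y ≤ B)
    {x : ℤ} (hx : x ∈ Finset.Ioo a b) :
    hittingTime p a b x ≤ (b - a) ^ 2 * (Real.exp B / δ) := by
  obtain ⟨hax, hxb⟩ := Finset.mem_Ioo.mp hx
  have hab : (0 : ℝ) ≤ b - a := by exact_mod_cast (by omega : 0 ≤ b - a)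
  have hterm : ∀ y ∈ Finset.Ico x b, crossingTime p a y ≤ (b - a) * (Real.exp B / δ) := by
    intro y hy
    rw [Finset.mem_Ico] at hy
    have hay : a < y := hax.trans_le hy.1
    exact crossingTime_le hδ hp hay hy.2 fun z hz ↦ hB z hz y (Finset.mem_Ioo.mpr ⟨hay, hy.2⟩)
  have hcard : ((Finset.Ico x b).card : ℝ) ≤ b - a := by
    rw [Int.card_Ico]
    exact_mod_cast (by omega : ((b - x).toNat : ℤ) ≤ b - a)
  calc hittingTime p a b x ≤ (Finset.Ico x b).card • ((b - a) * (Real.exp B / δ)) :=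
        Finset.sum_le_card_nsmul _ _ _ hterm
    _ ≤ (b - a) * ((b - a) * (Real.exp B / δ)) := by
        rw [nsmul_eq_mul]
        gcongr
    _ = (b - a) ^ 2 * (Real.exp B / δ) := by ring

end HittingTime

theorem stepProb_nonneg {q : ℝ} (hq : q ∈ Icc 0 1) (s : ℤ) : 0 ≤ stepProb q s := by
  unfold stepProb
  split_ifs <;> linarith [hq.1, hq.2]

theorem stepProb_eq_zero_of_abs_ne_one (q : ℝ) {s : ℤ} (hs : |s| ≠ 1) : stepProb q s = 0 := by
  rw [Ne, abs_eq zero_le_one, not_or] at hs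
  rw [stepProb, if_neg hs.1, if_neg hs.2]

theorem sum_stepProb_mul_le {q : ℝ} (hq : q ∈ Icc 0 1) {g : ℤ → ℝ} (hg : ∀ y, 0 ≤ g y)
    (I : Finset ℤ) (x : ℤ) :
    ∑ y ∈ I, stepProb q (y - x) * g y ≤ q * g (x + 1) + (1 - q) * g (x - 1) := by
  have hsplit : ∀ y, stepProb q (y - x) * g y =
      (if x + 1 = y then q * g y else 0) + (if x - 1 = y then (1 - q) * g y else 0) := by
    intro y
    unfold stepProb
    split_ifs <;> first | omega | simp
  simp only [hsplit, Finset.sum_add_distrib, Finset.sum_ite_eq]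
  have hright : 0 ≤ q * g (x + 1) := mul_nonneg hq.1 (hg _)
  have hleft : 0 ≤ (1 - q) * g (x - 1) := mul_nonneg (sub_nonneg.mpr hq.2) (hg _)
  split_ifs <;> linarith

/-- The quenched probability that the walk started at `x` in the environment `p` is in `I` at all
times `1, …, n`. -/
noncomputable def survivalProb (p : ℤ → ℝ) (I : Finset ℤ) : ℕ → ℤ → ℝ
  | 0, _ => 1
  | n + 1, x => ∑ y ∈ I, stepProb (p x) (y - x) * survivalProb p I n y

section Survival

variable {p : ℤ → ℝ} {I : Finset ℤ}

theorem survivalProb_succ_le (hp : ∀ x ∈ I, p x ∈ Icc 0 1) (n : ℕ) {x : ℤ} (hx : x ∈ I) :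
    survivalProb p I (n + 1) x ≤ survivalProb p I n x := by
  induction n generalizing x with
  | zero => simpa [survivalProb] using
      sum_stepProb_mul_le (g := fun _ ↦ 1) (hp x hx) (fun _ ↦ zero_le_one) I x
  | succ n ih => exact Finset.sum_le_sum fun y hy ↦
      mul_le_mul_of_nonneg_left (ih hy) (stepProb_nonneg (hp x hx) _)

theorem survivalProb_antitone (hp : ∀ x ∈ I, p x ∈ Icc 0 1) {x : ℤ} (hx : x ∈ I) :
    Antitone fun n ↦ survivalProb p I n x :=
  antitone_nat_of_succ_le fun n ↦ survivalProb_succ_le hp n hx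

theorem sum_survivalProb_le (hp : ∀ x ∈ I, p x ∈ Icc 0 1) {f : ℤ → ℝ} (hf₀ : ∀ x, 0 ≤ f x)
    (hf : ∀ x ∈ I, 1 + (p x * f (x + 1) + (1 - p x) * f (x - 1)) ≤ f x)
    (n : ℕ) {x : ℤ} (hx : x ∈ I) :
    ∑ k ∈ Finset.range n, survivalProb p I k x ≤ f x := by
  induction n generalizing x with
  | zero => simpa using hf₀ x
  | succ n ih =>
    calc ∑ k ∈ Finset.range (n + 1), survivalProb p I k x
        = 1 + ∑ y ∈ I, stepProb (p x) (y - x) * ∑ k ∈ Finset.range n, survivalProb p I k y := by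
          simp only [Finset.sum_range_succ', survivalProb, Finset.mul_sum]
          rw [Finset.sum_comm, add_comm]
      _ ≤ 1 + ∑ y ∈ I, stepProb (p x) (y - x) * f y := by
          gcongr with y hy
          · exact stepProb_nonneg (hp x hx) _
          · exact ih hy
      _ ≤ 1 + (p x * f (x + 1) + (1 - p x) * f (x - 1)) := by
          gcongr
          exact sum_stepProb_mul_le (hp x hx) hf₀ I x
      _ ≤ f x := hf x hx

end Survival

/-- The set of environments that, at the sites of `I`, are `δ`-elliptic and have a potential which
climbs by at most `B` from left to right. -/
def tameEnv (I : Finset ℤ) (δ B : ℝ) : Set (ℤ → ℝ) :=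
  {p | (∀ x ∈ I, p x ∈ Icc δ (1 - δ)) ∧ ∀ z ∈ I, ∀ y ∈ I, potentialDiff p z y ≤ B}

theorem measurableSet_tameEnv (I : Finset ℤ) (δ B : ℝ) : MeasurableSet (tameEnv I δ B) := by
  simp only [tameEnv, Set.ofPred_and, Set.ofPred_forall]
  refine .inter (I.measurableSet_biInter fun x _ ↦ measurable_pi_apply x measurableSet_Icc)
    (I.measurableSet_biInter fun z _ ↦ I.measurableSet_biInter fun y _ ↦ ?_)
  exact measurableSet_le (measurable_potentialDiff z y) measurable_const

theorem survivalProb_le_of_mem_tameEnv {p : ℤ → ℝ} {a b : ℤ} {δ B : ℝ} (hδ : 0 < δ)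
    (hp : p ∈ tameEnv (Finset.Ioo a b) δ B) (n : ℕ) {x : ℤ} (hx : x ∈ Finset.Ioo a b) :
    survivalProb p (Finset.Ioo a b) n x ≤ (b - a) ^ 2 * (Real.exp B / δ) / (n + 1) := by
  obtain ⟨hell, hpot⟩ := hp
  have hpos : ∀ x ∈ Finset.Ioo a b, 0 < p x := fun x hx ↦ hδ.trans_le (hell x hx).1
  have hlt : ∀ x ∈ Finset.Ioo a b, p x < 1 := fun x hx ↦ by linarith [(hell x hx).2]
  have hunit : ∀ x ∈ Finset.Ioo a b, p x ∈ Icc 0 1 := fun x hx ↦ ⟨(hpos x hx).le, (hlt x hx).le⟩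
  rw [le_div_iff₀' (by positivity)]
  calc (n + 1 : ℝ) * survivalProb p (Finset.Ioo a b) n x
      = (Finset.range (n + 1)).card • survivalProb p (Finset.Ioo a b) n x := by simp
    _ ≤ ∑ k ∈ Finset.range (n + 1), survivalProb p (Finset.Ioo a b) k x :=
        Finset.card_nsmul_le_sum _ _ _ fun k hk ↦
          survivalProb_antitone hunit hx (Finset.mem_range_succ_iff.mp hk)
    _ ≤ hittingTime p a b x :=
        sum_survivalProb_le hunit (hittingTime_nonneg fun x hx ↦ (hpos x hx).le)
          (fun x hx ↦ (hittingTime_eq_one_add hx (hpos x hx) (hlt x hx)).ge) (n + 1) hx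
    _ ≤ (b - a) ^ 2 * (Real.exp B / δ) := hittingTime_le hδ (fun x hx ↦ (hell x hx).1) hpot hx

/-! ### Probability bounds -/

section ProbabilityBounds

variable {Ω : Type*} [mΩ : MeasurableSpace Ω] {μ : Measure Ω} [IsProbabilityMeasure μ]

theorem measureReal_inter_le_of_condExp_indicator_le {m : MeasurableSpace Ω} (hm : m ≤ mΩ)
    {s t : Set Ω} (hs : MeasurableSet[m] s) (ht : MeasurableSet[mΩ] t) {c : ℝ} (hc : 0 ≤ c)
    (hle : ∀ᵐ ω ∂μ, ω ∈ s → (μ[t.indicator (fun _ ↦ (1 : ℝ)) | m]) ω ≤ c) :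
    μ.real (s ∩ t) ≤ c := by
  have hint : Integrable (t.indicator fun _ ↦ (1 : ℝ)) μ := (integrable_const _).indicator ht
  calc μ.real (s ∩ t) = ∫ ω in s, t.indicator (fun _ ↦ (1 : ℝ)) ω ∂μ := by
        rw [integral_indicator_const _ ht, measureReal_restrict_apply ht, smul_eq_mul, mul_one,
          inter_comm]
    _ = ∫ ω in s, (μ[t.indicator (fun _ ↦ (1 : ℝ)) | m]) ω ∂μ :=
        (setIntegral_condExp hm hint hs).symm
    _ ≤ ∫ _ in s, c ∂μ :=
        setIntegral_mono_on_ae integrable_condExp.integrableOn integrableOn_const (hm s hs) hle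
    _ = μ.real s * c := by rw [setIntegral_const, smul_eq_mul]
    _ ≤ c := mul_le_of_le_one_left hc measureReal_le_one

theorem ae_eventually_notMem_of_measureReal_le {s : ℕ → Set Ω} {u : ℕ → ℝ} (hu : Summable u)
    (hs : ∀ᶠ k in atTop, μ.real (s k) ≤ u k) : ∀ᵐ ω ∂μ, ∀ᶠ k in atTop, ω ∉ s k := by
  have hsum : Summable fun k ↦ μ.real (s k) := by
    refine hu.of_norm_bounded_eventually_nat ?_
    filter_upwards [hs] with k hk
    rwa [Real.norm_of_nonneg measureReal_nonneg]
  exact ae_eventually_notMem (by simpa using hsum.tsum_ofReal_ne_top)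

theorem measureReal_forall_notMem_le_exp {ι E : Type*} [MeasurableSpace E] {f : ι → Ω → E}
    (hf : ∀ i, Measurable (f i)) (hindep : iIndepFun f μ) {D : Set E} (hD : MeasurableSet D)
    {t : ℝ} (S : Finset ι) (ht : ∀ i ∈ S, t ≤ μ.real (f i ⁻¹' D)) :
    μ.real {ω | ∀ i ∈ S, f i ω ∉ D} ≤ Real.exp (-(S.card * t)) := by
  have hfactor : ∀ i ∈ S, μ.real (f i ⁻¹' Dᶜ) ≤ Real.exp (-t) := by
    intro i hi
    rw [preimage_compl, probReal_compl_eq_one_sub (hf i hD)]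
    linarith [ht i hi, Real.one_sub_le_exp_neg t]
  calc μ.real {ω | ∀ i ∈ S, f i ω ∉ D} = μ.real (⋂ i ∈ S, f i ⁻¹' Dᶜ) := by
        congr 1
        ext ω
        simp
    _ = ∏ i ∈ S, μ.real (f i ⁻¹' Dᶜ) := by
        rw [measureReal_def, hindep.measure_inter_preimage_eq_mul S fun _ _ ↦ hD.compl,
          ENNReal.toReal_prod]
        rfl
    _ ≤ Real.exp (-t) ^ S.card :=
        (Finset.prod_le_prod (fun _ _ ↦ measureReal_nonneg) hfactor).trans_eq
          (Finset.prod_const _)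
    _ = Real.exp (-(S.card * t)) := by
        rw [← Real.exp_nat_mul, mul_neg]

end ProbabilityBounds

/-! ### The environment and the walk -/

theorem abs_log_odds_le {δ q : ℝ} (hδ : 0 < δ) (hq : q ∈ Icc δ (1 - δ)) :
    |Real.log ((1 - q) / q)| ≤ -Real.log δ := by
  have hq₀ : 0 < q := hδ.trans_le hq.1
  have hq₁ : 0 < 1 - q := by linarith [hq.2]
  have hlow : Real.log δ ≤ Real.log q := Real.log_le_log hδ hq.1
  have hlow' : Real.log δ ≤ Real.log (1 - q) := Real.log_le_log hδ (by linarith [hq.2])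
  have hup : Real.log q ≤ 0 := Real.log_nonpos hq₀.le (by linarith)
  have hup' : Real.log (1 - q) ≤ 0 := Real.log_nonpos hq₁.le (by linarith)
  rw [Real.log_div hq₁.ne' hq₀.ne', abs_le]
  constructor <;> linarith

section FollowStay

variable {Ω : Type*}

/-- The event that `X` follows the path `x` up to time `n` and then spends the next `m` steps
in `I`. -/
def followStay (X : ℕ → Ω → ℤ) (x : ℕ → ℤ) (n : ℕ) (I : Finset ℤ) (m : ℕ) : Set Ω :=
  {ω | (∀ i ≤ n, X i ω = x i) ∧ ∀ j ∈ Finset.Ioc n (n + m), X j ω ∈ I}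

theorem mem_followStay_update_iff {X : ℕ → Ω → ℤ} {x : ℕ → ℤ} {n : ℕ} {I : Finset ℤ} {m : ℕ}
    {y : ℤ} (hy : y ∈ I) {ω : Ω} :
    ω ∈ followStay X (Function.update x (n + 1) y) (n + 1) I m ↔
      ω ∈ followStay X x n I (m + 1) ∧ X (n + 1) ω = y := by
  have hpath : ∀ i ≤ n, Function.update x (n + 1) y i = x i :=
    fun i hi ↦ Function.update_of_ne (by omega) _ _
  simp only [followStay, Finset.mem_Ioc, mem_ofPred_eq]
  constructor
  · rintro ⟨hfollow, hstay⟩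
    have hlast : X (n + 1) ω = y := by simpa using hfollow (n + 1) le_rfl
    refine ⟨⟨fun i hi ↦ (hfollow i (hi.trans n.le_succ)).trans (hpath i hi), fun j hj ↦ ?_⟩, hlast⟩
    obtain rfl | hj' := eq_or_ne j (n + 1)
    · rwa [hlast]
    · exact hstay j (by omega)
  · rintro ⟨⟨hfollow, hstay⟩, hlast⟩
    refine ⟨fun i hi ↦ ?_, fun j hj ↦ hstay j (by omega)⟩
    obtain rfl | hi' := eq_or_ne i (n + 1)
    · rwa [Function.update_self]
    · rw [hpath i (by omega), hfollow i (by omega)]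

theorem indicator_followStay_succ (X : ℕ → Ω → ℤ) (x : ℕ → ℤ) (n : ℕ) (I : Finset ℤ) (m : ℕ) :
    (followStay X x n I (m + 1)).indicator (fun _ ↦ (1 : ℝ)) =
      ∑ y ∈ I, (followStay X (Function.update x (n + 1) y) (n + 1) I m).indicator fun _ ↦ 1 := by
  classical
  ext ω
  have hterm : ∀ y ∈ I,
      (followStay X (Function.update x (n + 1) y) (n + 1) I m).indicator (fun _ ↦ (1 : ℝ)) ω =
        if X (n + 1) ω = y then (followStay X x n I (m + 1)).indicator (fun _ ↦ 1) ω else 0 := by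
    intro y hy
    simp only [indicator_apply, mem_followStay_update_iff hy, and_comm, ite_and]
  rw [Finset.sum_apply, Finset.sum_congr rfl hterm, Finset.sum_ite_eq]
  split_ifs with hmem
  · rfl
  · exact indicator_of_notMem (fun hω ↦ hmem (hω.2 (n + 1) (by simp))) _

end FollowStay

section SinaiWalk

variable {Ω : Type*} [mΩ : MeasurableSpace Ω] {μ : Measure Ω}

/-- The standing assumptions on the environment `env`: independent, `δ`-elliptic sites with centred
increments of the potential. The sites need not be identically distributed. -/
structure IsSinaiEnv (env : ℤ → Ω → ℝ) (δ : ℝ) (μ : Measure Ω) : Prop where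
  measurable : ∀ i, Measurable (env i)
  indep : iIndepFun env μ
  pos : 0 < δ
  elliptic : ∀ i, ∀ᵐ ω ∂μ, env i ω ∈ Icc δ (1 - δ)
  integral_log_odds : ∀ i, ∫ ω, Real.log ((1 - env i ω) / env i ω) ∂μ = 0

namespace IsSinaiEnv

variable {env : ℤ → Ω → ℝ} {δ : ℝ}

theorem of_identDistrib (hmeas : ∀ i, Measurable (env i)) (hindep : iIndepFun env μ)
    (hident : ∀ i, IdentDistrib (env i) (env 0) μ μ) (hδ : 0 < δ)
    (hell : ∀ᵐ ω ∂μ, env 0 ω ∈ Icc δ (1 - δ))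
    (hmean : ∫ ω, Real.log ((1 - env 0 ω) / env 0 ω) ∂μ = 0) : IsSinaiEnv env δ μ where
  measurable := hmeas
  indep := hindep
  pos := hδ
  elliptic i := (hident i).symm.ae_snd measurableSet_Icc hell
  integral_log_odds i := ((hident i).comp (u := fun q ↦ Real.log ((1 - q) / q))
    (by fun_prop)).integral_eq.trans hmean

variable [IsProbabilityMeasure μ]

theorem log_neg (h : IsSinaiEnv env δ μ) : Real.log δ < 0 := by
  obtain ⟨ω, hω⟩ := (h.elliptic 0).exists
  exact Real.log_neg h.pos (by linarith [hω.1, hω.2, h.pos])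

theorem hasSubgaussianMGF_log_odds (h : IsSinaiEnv env δ μ) (i : ℤ) :
    HasSubgaussianMGF (fun ω ↦ Real.log ((1 - env i ω) / env i ω)) (‖Real.log δ‖₊ ^ 2) μ := by
  have hbdd : ∀ᵐ ω ∂μ, Real.log ((1 - env i ω) / env i ω) ∈ Icc (Real.log δ) (-Real.log δ) := by
    filter_upwards [h.elliptic i] with ω hω
    simpa [abs_le] using abs_log_odds_le h.pos hω
  have hmeas : Measurable fun ω ↦ Real.log ((1 - env i ω) / env i ω) := by
    have := h.measurable i
    fun_prop
  convert hasSubgaussianMGF_of_mem_Icc_of_integral_eq_zero hmeas.aemeasurable hbdd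
    (h.integral_log_odds i) using 2
  rw [show -Real.log δ - Real.log δ = -(2 * Real.log δ) by ring, nnnorm_neg, nnnorm_mul]
  simp

theorem measureReal_lt_potentialDiff_le (h : IsSinaiEnv env δ μ) {B L : ℝ} (hB : 0 ≤ B) {z y : ℤ}
    (hL : (y - z : ℝ) ≤ L) :
    μ.real {ω | B < potentialDiff (env · ω) z y} ≤
      Real.exp (-(B ^ 2 / (2 * (L * Real.log δ ^ 2)))) := by
  rcases le_or_gt y z with hyz | hzy
  · simp [potentialDiff, Finset.Ioc_eq_empty_of_le hyz, hB.not_gt, Real.exp_nonneg]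
  have hindep : iIndepFun (fun i ω ↦ Real.log ((1 - env i ω) / env i ω)) μ :=
    h.indep.comp (fun _ q ↦ Real.log ((1 - q) / q)) fun _ ↦ by fun_prop
  have hpos : (0 : ℝ) < y - z := by exact_mod_cast sub_pos.mpr hzy
  have hproxy : ((∑ i ∈ Finset.Ioc z y, ‖Real.log δ‖₊ ^ 2 : NNReal) : ℝ) =
      (y - z) * Real.log δ ^ 2 := by
    have hcard : ((Finset.Ioc z y).card : ℝ) = y - z := by
      rw [Int.card_Ioc]
      exact_mod_cast Int.toNat_of_nonneg (sub_nonneg.mpr hzy.le)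
    rw [Finset.sum_const, nsmul_eq_mul, NNReal.coe_mul, NNReal.coe_natCast, hcard]
    simp
  calc μ.real {ω | B < potentialDiff (env · ω) z y}
      ≤ μ.real {ω | B ≤ potentialDiff (env · ω) z y} :=
        measureReal_mono fun _ (hω : B < _) ↦ hω.le
    _ ≤ Real.exp (-(B ^ 2 / (2 * ((y - z) * Real.log δ ^ 2)))) := by
        rw [← hproxy, ← neg_div]
        exact HasSubgaussianMGF.measure_sum_ge_le_of_iIndepFun hindep
          (fun i _ ↦ h.hasSubgaussianMGF_log_odds i) hB
    _ ≤ Real.exp (-(B ^ 2 / (2 * (L * Real.log δ ^ 2)))) := by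
        have : 0 < Real.log δ ^ 2 := sq_pos_of_neg h.log_neg
        gcongr

theorem measureReal_notMem_tameEnv_le (h : IsSinaiEnv env δ μ) {a b : ℤ} {B : ℝ} (hB : 0 ≤ B)
    (hab : a ≤ b) :
    μ.real {ω | (env · ω) ∉ tameEnv (Finset.Ioo a b) δ B} ≤
      (b - a) ^ 2 * Real.exp (-(B ^ 2 / (2 * ((b - a) * Real.log δ ^ 2)))) := by
  set I := Finset.Ioo a b
  have hcover : {ω | (env · ω) ∉ tameEnv I δ B} ≤ᵐ[μ]
      ⋃ q ∈ I ×ˢ I, {ω | B < potentialDiff (env · ω) q.1 q.2} := by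
    filter_upwards [ae_all_iff.mpr h.elliptic] with ω hell hω
    by_contra hsmall
    replace hsmall : ω ∉ ⋃ q ∈ I ×ˢ I, {ω | B < potentialDiff (env · ω) q.1 q.2} := hsmall
    simp only [mem_iUnion, not_exists, Finset.mem_product] at hsmall
    exact hω ⟨fun x _ ↦ hell x, fun z hz y hy ↦ not_lt.mp (hsmall (z, y) ⟨hz, hy⟩)⟩
  have hone : ∀ q ∈ I ×ˢ I, μ.real {ω | B < potentialDiff (env · ω) q.1 q.2} ≤
      Real.exp (-(B ^ 2 / (2 * ((b - a) * Real.log δ ^ 2)))) := by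
    intro q hq
    simp only [I, Finset.mem_product, Finset.mem_Ioo] at hq
    exact h.measureReal_lt_potentialDiff_le hB
      (by exact_mod_cast (by omega : q.2 - q.1 ≤ b - a))
  have hcard : (I.card : ℝ) ≤ b - a := by
    rw [Int.card_Ioo]
    exact_mod_cast (by omega : ((b - a - 1).toNat : ℤ) ≤ b - a)
  calc μ.real {ω | (env · ω) ∉ tameEnv I δ B}
      ≤ μ.real (⋃ q ∈ I ×ˢ I, {ω | B < potentialDiff (env · ω) q.1 q.2}) :=
        ENNReal.toReal_mono (measure_ne_top _ _) (measure_mono_ae hcover)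
    _ ≤ ∑ q ∈ I ×ˢ I, μ.real {ω | B < potentialDiff (env · ω) q.1 q.2} :=
        measureReal_biUnion_finset_le _ _
    _ ≤ (I ×ˢ I).card • Real.exp (-(B ^ 2 / (2 * ((b - a) * Real.log δ ^ 2)))) :=
        Finset.sum_le_card_nsmul _ _ _ hone
    _ ≤ (b - a) ^ 2 * Real.exp (-(B ^ 2 / (2 * ((b - a) * Real.log δ ^ 2)))) := by
        rw [Finset.card_product, nsmul_eq_mul, Nat.cast_mul, ← sq]
        gcongr

end IsSinaiEnv

/-- `X` is a random walk in the environment `env`, started at `0`: given the environment, the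
probability of following the path `x` up to time `n` is the product of its step probabilities. -/
structure IsWalkInEnv (env : ℤ → Ω → ℝ) (X : ℕ → Ω → ℤ) (μ : Measure Ω) : Prop where
  measurable_env : ∀ i, Measurable (env i)
  measurable : ∀ n, Measurable (X n)
  start : ∀ᵐ ω ∂μ, X 0 ω = 0
  quenched : ∀ (n : ℕ) (x : ℕ → ℤ), x 0 = 0 →
    μ[{ω | ∀ i ≤ n, X i ω = x i}.indicator (fun _ ↦ (1 : ℝ)) |
        MeasurableSpace.comap (fun ω i ↦ env i ω) MeasurableSpace.pi]
      =ᵐ[μ] fun ω ↦ ∏ i ∈ Finset.range n, stepProb (env (x i) ω) (x (i + 1) - x i)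

namespace IsWalkInEnv

variable {env : ℤ → Ω → ℝ} {X : ℕ → Ω → ℤ}

theorem comap_env_le (h : IsWalkInEnv env X μ) :
    MeasurableSpace.comap (fun ω i ↦ env i ω) MeasurableSpace.pi ≤ mΩ :=
  (measurable_pi_lambda _ h.measurable_env).comap_le

theorem measurableSet_followStay (h : IsWalkInEnv env X μ) (x : ℕ → ℤ) (n : ℕ) (I : Finset ℤ)
    (m : ℕ) : MeasurableSet (followStay X x n I m) := by
  have := h.measurable
  unfold followStay
  measurability

variable [IsProbabilityMeasure μ]

theorem condExp_followStay (h : IsWalkInEnv env X μ) (I : Finset ℤ) (m n : ℕ) {x : ℕ → ℤ}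
    (hx : x 0 = 0) :
    μ[(followStay X x n I m).indicator (fun _ ↦ (1 : ℝ)) |
        MeasurableSpace.comap (fun ω i ↦ env i ω) MeasurableSpace.pi]
      =ᵐ[μ] fun ω ↦ (∏ i ∈ Finset.range n, stepProb (env (x i) ω) (x (i + 1) - x i)) *
        survivalProb (env · ω) I m (x n) := by
  induction m generalizing n x with
  | zero => simpa [followStay, survivalProb] using h.quenched n x hx
  | succ m ih =>
    have hstep : ∀ᵐ ω ∂μ, ∀ y ∈ I, _ := (I.eventually_all).mpr fun y _ ↦
      ih (n + 1) (x := Function.update x (n + 1) y) (by simpa using hx)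
    have hint : ∀ y ∈ I, Integrable
        ((followStay X (Function.update x (n + 1) y) (n + 1) I m).indicator fun _ ↦ (1 : ℝ)) μ :=
      fun y _ ↦ (integrable_const _).indicator (h.measurableSet_followStay _ _ I m)
    rw [indicator_followStay_succ]
    filter_upwards [condExp_finsetSum hint _, hstep] with ω hsum hω
    rw [hsum, Finset.sum_apply, Finset.sum_congr rfl hω, survivalProb, Finset.mul_sum]
    refine Finset.sum_congr rfl fun y _ ↦ ?_
    have hpath : ∀ i ≤ n, Function.update x (n + 1) y i = x i :=
      fun i hi ↦ Function.update_of_ne (by omega) _ _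
    rw [Finset.prod_range_succ, hpath n le_rfl, Function.update_self, mul_assoc]
    congr 1
    refine Finset.prod_congr rfl fun i hi ↦ ?_
    rw [Finset.mem_range] at hi
    rw [hpath i hi.le, hpath (i + 1) hi]

theorem measureReal_tameEnv_inter_stay_le (h : IsWalkInEnv env X μ) {a b : ℤ} {δ : ℝ} (hδ : 0 < δ)
    (hab : 0 ∈ Finset.Ioo a b) (B : ℝ) (n : ℕ) :
    μ.real {ω | (env · ω) ∈ tameEnv (Finset.Ioo a b) δ B ∧ ∀ i ≤ n, X i ω ∈ Finset.Ioo a b} ≤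
      (b - a) ^ 2 * (Real.exp B / δ) / (n + 1) := by
  set I := Finset.Ioo a b
  have hsub : {ω | (env · ω) ∈ tameEnv I δ B ∧ ∀ i ≤ n, X i ω ∈ I} ≤ᵐ[μ]
      ((fun ω i ↦ env i ω) ⁻¹' tameEnv I δ B ∩ followStay X 0 0 I n : Set Ω) := by
    filter_upwards [h.start] with ω hω hstay
    refine ⟨hstay.1, fun i hi ↦ ?_, fun j hj ↦ hstay.2 j ?_⟩
    · rw [Nat.le_zero.mp hi, hω, Pi.zero_apply]
    · simpa using (Finset.mem_Ioc.mp hj).2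
  refine (ENNReal.toReal_mono (measure_ne_top _ _) (measure_mono_ae hsub)).trans ?_
  refine measureReal_inter_le_of_condExp_indicator_le h.comap_env_le
    ⟨_, measurableSet_tameEnv I δ B, rfl⟩ (h.measurableSet_followStay 0 0 I n) (by positivity) ?_
  filter_upwards [h.condExp_followStay I n 0 (x := 0) rfl] with ω hω htame
  rw [hω, Finset.prod_range_zero, one_mul]
  exact survivalProb_le_of_mem_tameEnv hδ htame n hab

theorem ae_not_follow (h : IsWalkInEnv env X μ) {x : ℕ → ℤ} (hx : x 0 = 0) {n : ℕ}
    (hjump : |x (n + 1) - x n| ≠ 1) : ∀ᵐ ω ∂μ, ¬ ∀ i ≤ n + 1, X i ω = x i := by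
  have hmeas : MeasurableSet {ω | ∀ i ≤ n + 1, X i ω = x i} := by
    have := h.measurable
    measurability
  have hnull : μ.real (univ ∩ {ω | ∀ i ≤ n + 1, X i ω = x i}) ≤ 0 := by
    refine measureReal_inter_le_of_condExp_indicator_le h.comap_env_le .univ hmeas le_rfl ?_
    filter_upwards [h.quenched (n + 1) x hx] with ω hω _
    rw [hω, Finset.prod_range_succ, stepProb_eq_zero_of_abs_ne_one _ hjump, mul_zero]
  rw [univ_inter] at hnull
  simpa [ae_iff] using (measureReal_eq_zero_iff).mp (hnull.antisymm measureReal_nonneg)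

theorem ae_abs_step_eq_one (h : IsWalkInEnv env X μ) :
    ∀ᵐ ω ∂μ, ∀ n, |X (n + 1) ω - X n ω| = 1 := by
  rw [ae_all_iff]
  intro n
  let path (s : Fin (n + 2) → ℤ) (i : ℕ) : ℤ := s (Fin.ofNat (n + 2) i)
  have hpath : ∀ᵐ ω ∂μ, ∀ s, path s 0 = 0 → |path s (n + 1) - path s n| ≠ 1 →
      ¬ ∀ i ≤ n + 1, X i ω = path s i := by
    simp only [ae_all_iff]
    exact fun s hs hjump ↦ h.ae_not_follow hs hjump
  filter_upwards [hpath, h.start] with ω hω hstart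
  have hX : ∀ i ≤ n + 1, X i ω = path (fun j ↦ X j ω) i := by
    intro i hi
    simp [path, Nat.mod_eq_of_lt (Nat.lt_succ_of_le hi)]
  by_contra hjump
  rw [hX (n + 1) le_rfl, hX n n.le_succ] at hjump
  exact hω (fun j ↦ X j ω) ((hX 0 (by simp)).symm.trans hstart) hjump hX

end IsWalkInEnv

/-- A scenery with independent sites, not necessarily identically distributed, whose lower tails
are uniformly at least `1 / (log λ) ^ α` for large `λ`. -/
structure IsHeavyTailedScenery (sce : ℤ → Ω → ℝ) (α : ℝ) (μ : Measure Ω) : Prop where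
  measurable : ∀ x, Measurable (sce x)
  indep : iIndepFun sce μ
  tail : ∀ᶠ lam in atTop, ∀ x, 1 / Real.log lam ^ α ≤ μ.real {ω | sce x ω < -lam}

theorem IsHeavyTailedScenery.of_identDistrib {sce : ℤ → Ω → ℝ} {α lam₀ : ℝ}
    (hmeas : ∀ x, Measurable (sce x)) (hindep : iIndepFun sce μ)
    (hident : ∀ x, IdentDistrib (sce x) (sce 0) μ μ)
    (htail : ∀ lam, lam₀ ≤ lam → 1 / Real.log lam ^ α ≤ μ.real {ω | lam < max (-sce 0 ω) 0}) :
    IsHeavyTailedScenery sce α μ where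
  measurable := hmeas
  indep := hindep
  tail := by
    filter_upwards [eventually_ge_atTop lam₀, eventually_ge_atTop 0] with lam hlam hlam₀ x
    have hnegPart : {ω | lam < max (-sce 0 ω) 0} = sce 0 ⁻¹' Iio (-lam) := by
      ext ω
      simp [hlam₀.not_gt, lt_neg]
    calc 1 / Real.log lam ^ α ≤ μ.real (sce 0 ⁻¹' Iio (-lam)) := hnegPart ▸ htail lam hlam
      _ = μ.real (sce x ⁻¹' Iio (-lam)) :=
        congrArg ENNReal.toReal ((hident x).measure_preimage_eq measurableSet_Iio).symm

end SinaiWalk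

/-! ### Asymptotics -/

theorem summable_rpow_mul_exp_neg_mul_rpow {c s : ℝ} (hc : 0 < c) (hs : 0 < s) (r : ℝ) :
    Summable fun k : ℕ ↦ (k : ℝ) ^ r * Real.exp (-(c * (k : ℝ) ^ s)) := by
  have hpow : Tendsto (fun k : ℕ ↦ (k : ℝ) ^ s) atTop atTop :=
    (tendsto_rpow_atTop hs).comp tendsto_natCast_atTop_atTop
  have hexp := (isLittleO_exp_neg_mul_rpow_atTop hc (-(r + 2) / s)).isBigO.comp_tendsto hpow
  have hprod := (Asymptotics.isBigO_refl (fun k : ℕ ↦ (k : ℝ) ^ r) atTop).mul hexp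
  refine summable_of_isBigO_nat (Real.summable_nat_rpow.2 (by norm_num : (-2 : ℝ) < -1)) ?_
  simp only [Function.comp_def, neg_mul] at hprod
  refine hprod.trans_eventuallyEq ?_
  filter_upwards [eventually_gt_atTop 0] with k hk
  have hk' : (0 : ℝ) < k := Nat.cast_pos.mpr hk
  rw [← Real.rpow_mul hk'.le, ← Real.rpow_add hk', mul_div_cancel₀ _ hs.ne']
  ring_nf

theorem tendsto_rpow_add_mul_atTop {θ : ℝ} (hθ : 1 < θ) (γ : ℝ) :
    Tendsto (fun x : ℝ ↦ x ^ θ + γ * x) atTop atTop := by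
  have hfactor : Tendsto (fun x : ℝ ↦ x * (x ^ (θ - 1) + γ)) atTop atTop :=
    tendsto_id.atTop_mul_atTop₀
      (tendsto_atTop_add_const_right _ γ (tendsto_rpow_atTop (sub_pos.mpr hθ)))
  refine hfactor.congr' ?_
  filter_upwards [eventually_gt_atTop 0] with x hx
  rw [mul_add, ← Real.rpow_one_add' hx.le (by linarith), add_sub_cancel, mul_comm x γ]

theorem tendsto_log_natCast_atTop : Tendsto (fun n : ℕ ↦ Real.log n) atTop atTop :=
  Real.tendsto_log_atTop.comp tendsto_natCast_atTop_atTop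

theorem tendsto_rpow_mul_atBot_of_le_neg_exp {Z : ℕ → ℝ} {θ : ℝ} (hθ : 1 < θ)
    (hZ : ∀ᶠ n : ℕ in atTop, Z n ≤ -Real.exp (Real.log n ^ θ)) (γ : ℝ) :
    Tendsto (fun n : ℕ ↦ (n : ℝ) ^ γ * Z n) atTop atBot := by
  have hexp : Tendsto (fun n : ℕ ↦ Real.exp (Real.log n ^ θ + γ * Real.log n)) atTop atTop :=
    Real.tendsto_exp_atTop.comp ((tendsto_rpow_add_mul_atTop hθ γ).comp tendsto_log_natCast_atTop)
  refine tendsto_atBot_mono' _ ?_ (tendsto_neg_atTop_atBot.comp hexp)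
  filter_upwards [hZ, eventually_gt_atTop 0] with n hn hn₀
  have hn₀' : (0 : ℝ) < n := Nat.cast_pos.mpr hn₀
  calc (n : ℝ) ^ γ * Z n ≤ (n : ℝ) ^ γ * -Real.exp (Real.log n ^ θ) := by gcongr
    _ = -Real.exp (Real.log n ^ θ + γ * Real.log n) := by
        rw [Real.rpow_def_of_pos hn₀', mul_neg, ← Real.exp_add, add_comm, mul_comm γ]

theorem eventually_sum_le_neg_exp {v : ℕ → ℝ} {a θ : ℝ} (hθ : 1 < θ) (hv : ∀ i, v i ≤ a)
    (hdeep : ∀ᶠ n : ℕ in atTop, ∃ i ≤ n, v i < -Real.exp (2 * Real.log n ^ θ)) :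
    ∀ᶠ n : ℕ in atTop, ∑ i ∈ Finset.range (n + 1), v i ≤ -Real.exp (Real.log n ^ θ) := by
  have hpow : Tendsto (fun n : ℕ ↦ Real.log n ^ θ + -2 * Real.log n) atTop atTop :=
    (tendsto_rpow_add_mul_atTop hθ (-2)).comp tendsto_log_natCast_atTop
  filter_upwards [hdeep, hpow.eventually_ge_atTop 0,
    tendsto_log_natCast_atTop.eventually_ge_atTop 1, eventually_ge_atTop ⌈|a|⌉₊,
    eventually_gt_atTop 0] with n ⟨i, hi, hvi⟩ hlog hlog₁ hna hn₀
  have hn₀' : (0 : ℝ) < n := Nat.cast_pos.mpr hn₀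
  set E := Real.exp (Real.log n ^ θ)
  have hrest : n * |a| ≤ E := calc
    n * |a| ≤ (n : ℝ) ^ 2 := by
        rw [sq]
        gcongr
        exact Nat.ceil_le.mp hna
    _ = Real.exp (2 * Real.log n) := by
        rw [mul_comm, Real.exp_mul, Real.exp_log hn₀', Real.rpow_two]
    _ ≤ E := Real.exp_le_exp.mpr (by linarith)
  have hE : 2 ≤ E := by linarith [Real.add_one_le_exp (Real.log n ^ θ)]
  have hEsq : Real.exp (2 * Real.log n ^ θ) = E ^ 2 := by
    rw [← Real.exp_nat_mul, Nat.cast_ofNat]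
  have himem : i ∈ Finset.range (n + 1) := Finset.mem_range_succ_iff.mpr hi
  calc ∑ i ∈ Finset.range (n + 1), v i
      = v i + ∑ j ∈ (Finset.range (n + 1)).erase i, v j := (Finset.add_sum_erase _ _ himem).symm
    _ ≤ -E ^ 2 + ((Finset.range (n + 1)).erase i).card • |a| := by
        rw [← hEsq]
        gcongr
        exact Finset.sum_le_card_nsmul _ _ _ fun j _ ↦ (hv j).trans (le_abs_self a)
    _ = -E ^ 2 + n * |a| := by
        rw [Finset.card_erase_of_mem himem, Finset.card_range, Nat.add_sub_cancel, nsmul_eq_mul]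
    _ ≤ -E := by nlinarith

theorem eventually_exists_lt_neg_exp_log {v : ℕ → ℝ} {θ : ℝ} (hθ : 0 ≤ θ)
    (hdyadic : ∀ᶠ k : ℕ in atTop, ∃ i ≤ 2 ^ k, v i < -Real.exp (2 * (k : ℝ) ^ θ)) :
    ∀ᶠ n : ℕ in atTop, ∃ i ≤ n, v i < -Real.exp (2 * Real.log n ^ θ) := by
  have hlog : Tendsto (Nat.log 2) atTop atTop := tendsto_atTop.mpr fun k ↦ by
    filter_upwards [eventually_ge_atTop (2 ^ k)] with n hn
    exact Nat.le_log_of_pow_le one_lt_two hn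
  filter_upwards [hlog.eventually hdyadic, hlog.eventually_ge_atTop 3, eventually_gt_atTop 0]
    with n ⟨i, hi, hvi⟩ hn₃ hn₀
  refine ⟨i, hi.trans (Nat.pow_log_le_self 2 hn₀.ne'), hvi.trans_le ?_⟩
  have hn₃' : (3 : ℝ) ≤ Nat.log 2 n := by exact_mod_cast hn₃
  have hlog_le : Real.log n ≤ Nat.log 2 n := calc
    Real.log n ≤ Real.log (2 ^ (Nat.log 2 n + 1)) := by
        refine Real.log_le_log (Nat.cast_pos.mpr hn₀) ?_
        exact_mod_cast (Nat.lt_pow_succ_log_self one_lt_two n).le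
    _ = (Nat.log 2 n + 1) * Real.log 2 := by
        rw [Real.log_pow]
        push_cast
        rfl
    _ ≤ Nat.log 2 n := by nlinarith [Real.log_two_lt_d9]
  gcongr

/-- The half-width `⌈k ^ β⌉` of the window around `0` that the walk leaves before time `2 ^ k`. -/
noncomputable def windowRadius (β : ℝ) (k : ℕ) : ℕ := ⌈(k : ℝ) ^ β⌉₊

theorem rpow_le_windowRadius (β : ℝ) (k : ℕ) : (k : ℝ) ^ β ≤ windowRadius β k := Nat.le_ceil _

section WindowRadius

variable {β : ℝ} {k : ℕ}

theorem windowRadius_pos (hk : 0 < k) : 0 < windowRadius β k :=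
  Nat.ceil_pos.mpr (Real.rpow_pos_of_pos (Nat.cast_pos.mpr hk) β)

theorem windowRadius_le (hβ : 0 ≤ β) (hk : 0 < k) : (windowRadius β k : ℝ) ≤ 2 * (k : ℝ) ^ β := by
  refine Nat.ceil_le_two_mul ?_
  have : (1 : ℝ) ≤ (k : ℝ) ^ β := Real.one_le_rpow (Nat.one_le_cast.mpr hk) hβ
  linarith

theorem sq_window_width_le (hβ : 0 ≤ β) (hk : 0 < k) :
    ((windowRadius β k : ℝ) - -(windowRadius β k : ℝ)) ^ 2 ≤ 16 * (k : ℝ) ^ (2 * β) := by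
  calc ((windowRadius β k : ℝ) - -(windowRadius β k : ℝ)) ^ 2 = 4 * (windowRadius β k : ℝ) ^ 2 := by
        ring
    _ ≤ 4 * (2 * (k : ℝ) ^ β) ^ 2 := by
        gcongr
        exact windowRadius_le hβ hk
    _ = 16 * (k : ℝ) ^ (2 * β) := by
        rw [mul_comm 2 β, Real.rpow_mul (Nat.cast_nonneg k), Real.rpow_two]
        ring

end WindowRadius

theorem exists_le_eq_of_mem_uIcc {X : ℕ → ℤ} (hstep : ∀ i, |X (i + 1) - X i| ≤ 1) {m : ℕ} {y : ℤ}
    (hy : y ∈ uIcc (X 0) (X m)) : ∃ i ≤ m, X i = y := by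
  induction m with
  | zero => exact ⟨0, le_rfl, by simpa [le_antisymm_iff, and_comm] using hy⟩
  | succ m ih =>
    by_cases hmem : y ∈ uIcc (X 0) (X m)
    · obtain ⟨i, hi, hXi⟩ := ih hmem
      exact ⟨i, hi.trans m.le_succ, hXi⟩
    · have := abs_le.mp (hstep m)
      rw [mem_uIcc] at hy hmem
      exact ⟨m + 1, le_rfl, by omega⟩

theorem forall_exists_eq_or_of_notMem_Ioo {X : ℕ → ℤ} (hstep : ∀ i, |X (i + 1) - X i| ≤ 1)
    (h₀ : X 0 = 0) {N : ℤ} {m : ℕ} (hexit : X m ∉ Finset.Ioo (-N) N) :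
    (∀ y ∈ Finset.Ico 0 N, ∃ i ≤ m, X i = y) ∨ ∀ y ∈ Finset.Ioc (-N) 0, ∃ i ≤ m, X i = y := by
  simp only [Finset.mem_Ioo, Finset.mem_Ico, Finset.mem_Ioc] at hexit ⊢
  refine (le_or_gt N (X m)).imp (fun hN y hy ↦ ?_) fun hN y hy ↦ ?_ <;>
  · refine exists_le_eq_of_mem_uIcc hstep (mem_uIcc.mpr ?_)
    omega

/-! ### Dyadic time scales -/

section DyadicScales

variable {Ω : Type*} [mΩ : MeasurableSpace Ω] {μ : Measure Ω} [IsProbabilityMeasure μ]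
  {env : ℤ → Ω → ℝ} {X : ℕ → Ω → ℤ} {sce : ℤ → Ω → ℝ} {δ α β θ : ℝ}

theorem IsSinaiEnv.ae_eventually_mem_tameEnv (h : IsSinaiEnv env δ μ) (hβ₀ : 0 ≤ β) (hβ₂ : β < 2) :
    ∀ᵐ ω ∂μ, ∀ᶠ k : ℕ in atTop, (env · ω) ∈
      tameEnv (Finset.Ioo (-(windowRadius β k : ℤ)) (windowRadius β k)) δ (k / 2) := by
  have hlog : 0 < Real.log δ ^ 2 := sq_pos_of_neg h.log_neg
  have hc : 0 < 1 / (32 * Real.log δ ^ 2) := by positivity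
  have hsum := (summable_rpow_mul_exp_neg_mul_rpow hc (sub_pos.mpr hβ₂) (2 * β)).mul_left 16
  have hae := ae_eventually_notMem_of_measureReal_le (μ := μ) (s := fun k : ℕ ↦
    {ω | (env · ω) ∉ tameEnv (Finset.Ioo (-(windowRadius β k : ℤ)) (windowRadius β k)) δ (k / 2)})
    hsum ?_
  · simpa using hae
  filter_upwards [eventually_gt_atTop 0] with k hk
  have hk' : (0 : ℝ) < k := Nat.cast_pos.mpr hk
  have hN : (0 : ℝ) < windowRadius β k := Nat.cast_pos.mpr (windowRadius_pos hk)
  have hexponent : 1 / (32 * Real.log δ ^ 2) * (k : ℝ) ^ (2 - β) ≤ (k / 2 : ℝ) ^ 2 /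
      (2 * ((windowRadius β k - -windowRadius β k) * Real.log δ ^ 2)) := calc
    1 / (32 * Real.log δ ^ 2) * (k : ℝ) ^ (2 - β)
        = (k / 2 : ℝ) ^ 2 / (4 * (2 * (k : ℝ) ^ β) * Real.log δ ^ 2) := by
          rw [Real.rpow_sub hk', Real.rpow_two]
          ring
      _ ≤ (k / 2 : ℝ) ^ 2 / (4 * windowRadius β k * Real.log δ ^ 2) := by
          gcongr
          exact windowRadius_le hβ₀ hk
      _ = _ := by ring
  refine (h.measureReal_notMem_tameEnv_le (B := k / 2) (by positivity) (by omega)).trans ?_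
  push_cast
  refine (mul_le_mul (sq_window_width_le hβ₀ hk) (Real.exp_le_exp.mpr (neg_le_neg hexponent))
    (Real.exp_nonneg _) (by positivity)).trans_eq (mul_assoc _ _ _)

theorem exp_half_div_two_pow_le (k : ℕ) :
    Real.exp (k / 2) / (2 ^ k + 1) ≤ Real.exp (-(1 / 10 * k)) := by
  rw [div_le_iff₀ (by positivity)]
  calc Real.exp (k / 2) = Real.exp (-(1 / 10 * k)) * Real.exp (k * (3 / 5)) := by
        rw [← Real.exp_add]
        ring_nf
    _ ≤ Real.exp (-(1 / 10 * k)) * Real.exp (k * Real.log 2) := by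
        gcongr
        linarith [Real.log_two_gt_d9]
    _ ≤ Real.exp (-(1 / 10 * k)) * (2 ^ k + 1) := by
        rw [Real.exp_nat_mul, Real.exp_log two_pos]
        gcongr
        linarith

theorem IsWalkInEnv.ae_eventually_exists_exit (hX : IsWalkInEnv env X μ) (henv : IsSinaiEnv env δ μ)
    (hβ₀ : 0 ≤ β) (hβ₂ : β < 2) : ∀ᵐ ω ∂μ, ∀ᶠ k : ℕ in atTop,
      ∃ i ≤ 2 ^ k, X i ω ∉ Finset.Ioo (-(windowRadius β k : ℤ)) (windowRadius β k) := by
  have hsum := (summable_rpow_mul_exp_neg_mul_rpow (c := 1 / 10) (by norm_num) one_pos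
    (2 * β)).mul_left (16 / δ)
  have hae := ae_eventually_notMem_of_measureReal_le (μ := μ) (s := fun k : ℕ ↦
    {ω | (env · ω) ∈ tameEnv (Finset.Ioo (-(windowRadius β k : ℤ)) (windowRadius β k)) δ (k / 2) ∧
      ∀ i ≤ 2 ^ k, X i ω ∈ Finset.Ioo (-(windowRadius β k : ℤ)) (windowRadius β k)}) hsum ?_
  · filter_upwards [hae, henv.ae_eventually_mem_tameEnv hβ₀ hβ₂] with ω hω htame
    filter_upwards [hω, htame] with k hk hktame
    by_contra! hstay
    exact hk ⟨hktame, hstay⟩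
  filter_upwards [eventually_gt_atTop 0] with k hk
  have hδ := henv.pos
  have horigin : 0 ∈ Finset.Ioo (-(windowRadius β k : ℤ)) (windowRadius β k) := by
    have : 0 < windowRadius β k := windowRadius_pos hk
    rw [Finset.mem_Ioo]
    omega
  refine (hX.measureReal_tameEnv_inter_stay_le hδ horigin (k / 2) (2 ^ k)).trans ?_
  push_cast
  rw [Real.rpow_one]
  calc ((windowRadius β k : ℝ) - -(windowRadius β k : ℝ)) ^ 2 * (Real.exp (k / 2) / δ) / (2 ^ k + 1)
      = (windowRadius β k - -(windowRadius β k : ℝ)) ^ 2 / δ *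
          (Real.exp (k / 2) / (2 ^ k + 1)) := by ring
    _ ≤ 16 * (k : ℝ) ^ (2 * β) / δ * Real.exp (-(1 / 10 * k)) := by
        gcongr
        · exact sq_window_width_le hβ₀ hk
        · exact exp_half_div_two_pow_le k
    _ = 16 / δ * ((k : ℝ) ^ (2 * β) * Real.exp (-(1 / 10 * k))) := by ring

theorem IsHeavyTailedScenery.ae_eventually_exists_lt (h : IsHeavyTailedScenery sce α μ)
    (hθ : 0 < θ) (hβ : θ * α < β) {S : ℕ → Finset ℤ}
    (hS : ∀ k : ℕ, (k : ℝ) ^ β ≤ (S k).card) :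
    ∀ᵐ ω ∂μ, ∀ᶠ k : ℕ in atTop, ∃ x ∈ S k, sce x ω < -Real.exp (2 * (k : ℝ) ^ θ) := by
  have hc : (0 : ℝ) < 1 / 2 ^ α := by positivity
  have hsum := summable_rpow_mul_exp_neg_mul_rpow hc (sub_pos.mpr hβ) 0
  have hae := ae_eventually_notMem_of_measureReal_le (μ := μ) (s := fun k : ℕ ↦
    {ω | ∀ x ∈ S k, sce x ω ∉ Iio (-Real.exp (2 * (k : ℝ) ^ θ))}) hsum ?_
  · simpa using hae
  have hdepth : Tendsto (fun k : ℕ ↦ Real.exp (2 * (k : ℝ) ^ θ)) atTop atTop :=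
    Real.tendsto_exp_atTop.comp
      (((tendsto_rpow_atTop hθ).comp tendsto_natCast_atTop_atTop).const_mul_atTop two_pos)
  filter_upwards [hdepth.eventually h.tail, eventually_gt_atTop 0] with k htail hk
  have hk' : (0 : ℝ) < k := Nat.cast_pos.mpr hk
  refine (measureReal_forall_notMem_le_exp h.measurable h.indep measurableSet_Iio (S k)
    fun x _ ↦ htail x).trans ?_
  rw [Real.rpow_zero, one_mul, Real.exp_le_exp, neg_le_neg_iff, Real.log_exp]
  calc 1 / 2 ^ α * (k : ℝ) ^ (β - θ * α) = (k : ℝ) ^ β * (1 / (2 * (k : ℝ) ^ θ) ^ α) := by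
        rw [Real.mul_rpow two_pos.le (by positivity), ← Real.rpow_mul hk'.le, Real.rpow_sub hk']
        field_simp
    _ ≤ (S k).card * (1 / (2 * (k : ℝ) ^ θ) ^ α) := by
        gcongr
        exact hS k

theorem ae_eventually_exists_visit_lt (henv : IsSinaiEnv env δ μ) (hX : IsWalkInEnv env X μ)
    (hsce : IsHeavyTailedScenery sce α μ) (hα : 0 ≤ α) (hθ : 0 < θ) (hθα : θ * α < 2) :
    ∀ᵐ ω ∂μ, ∀ᶠ k : ℕ in atTop,
      ∃ i ≤ 2 ^ k, sce (X i ω) ω < -Real.exp (2 * (k : ℝ) ^ θ) := by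
  obtain ⟨β, hβ, hβ₂⟩ := exists_between hθα
  have hβ₀ : 0 ≤ β := (mul_nonneg hθ.le hα).trans hβ.le
  filter_upwards [hX.start, hX.ae_abs_step_eq_one, hX.ae_eventually_exists_exit henv hβ₀ hβ₂,
    hsce.ae_eventually_exists_lt hθ hβ (S := fun k ↦ Finset.Ico 0 (windowRadius β k))
      (fun k ↦ by simpa using rpow_le_windowRadius β k),
    hsce.ae_eventually_exists_lt hθ hβ (S := fun k ↦ Finset.Ioc (-windowRadius β k) 0)
      (fun k ↦ by simpa using rpow_le_windowRadius β k)]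
    with ω hstart hstep hexit hright hleft
  filter_upwards [hexit, hright, hleft] with k ⟨m, hm, hkexit⟩ ⟨x, hx, hxdeep⟩ ⟨y, hy, hydeep⟩
  rcases forall_exists_eq_or_of_notMem_Ioo (X := (X · ω)) (fun i ↦ (hstep i).le) hstart hkexit
    with hvisit | hvisit
  · obtain ⟨i, hi, rfl⟩ := hvisit x hx
    exact ⟨i, hi.trans hm, hxdeep⟩
  · obtain ⟨i, hi, rfl⟩ := hvisit y hy
    exact ⟨i, hi.trans hm, hydeep⟩

theorem stmt2_general (henv : IsSinaiEnv env δ μ) (hX : IsWalkInEnv env X μ)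
    (hsce : IsHeavyTailedScenery sce α μ) {a : ℝ} (ha : ∀ x, ∀ᵐ ω ∂μ, sce x ω ≤ a)
    (hα : 0 ≤ α) (hθ : 1 < θ) (hθα : θ * α < 2) :
    ∀ᵐ ω ∂μ, ∀ᶠ n : ℕ in atTop,
      ∑ i ∈ Finset.range (n + 1), sce (X i ω) ω ≤ -Real.exp (Real.log n ^ θ) := by
  have hθ₀ : 0 < θ := one_pos.trans hθ
  filter_upwards [ae_all_iff.mpr ha, ae_eventually_exists_visit_lt henv hX hsce hα hθ₀ hθα]
    with ω hle hdyadic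
  exact eventually_sum_le_neg_exp hθ (fun i ↦ hle (X i ω))
    (eventually_exists_lt_neg_exp_log hθ₀.le hdyadic)

end DyadicScales

/-- Remark 3.3: if `a := ess sup ξ₀ < ∞` and `Q{ξ₀⁻ > λ} ≥ 1/(log λ)^α` for all
large `λ` (for some `α ∈ (0,2)`), then for every `ε' > 0`, `ℙ⊗Q`-almost surely
`n^{−2/α+ε'} Z_n → −∞`. -/
theorem stmt2 {Ω : Type*} [MeasurableSpace Ω] (μ : Measure Ω) [IsProbabilityMeasure μ]
    -- the i.i.d. environment
    (env : ℤ → Ω → ℝ) (henv_meas : ∀ i, Measurable (env i))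
    (henv_indep : iIndepFun (m := fun _ : ℤ => (inferInstance : MeasurableSpace ℝ)) env μ)
    (henv_ident : ∀ i, IdentDistrib (env i) (env 0) μ μ)
    (δ : ℝ) (hδ0 : 0 < δ) (hδ1 : δ < 1 / 2)
    (henv_ell : ∀ i, ∀ᵐ ω ∂μ, δ ≤ env i ω ∧ env i ω ≤ 1 - δ)
    (henv_mean : ∫ ω, Real.log ((1 - env 0 ω) / env 0 ω) ∂μ = 0)
    (henv_var : 0 < variance (fun ω => Real.log ((1 - env 0 ω) / env 0 ω)) μ)
    -- Sinai's walk: a nearest-neighbour Markov chain in the environment `env`,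
    -- characterized by its quenched cylinder probabilities given `σ(env)`
    (X : ℕ → Ω → ℤ) (hX_meas : ∀ n, Measurable (X n))
    (hX0 : ∀ᵐ ω ∂μ, X 0 ω = 0)
    (hquenched : ∀ (n : ℕ) (x : ℕ → ℤ), x 0 = 0 →
      μ[Set.indicator {ω | ∀ i ≤ n, X i ω = x i} (fun _ => (1 : ℝ)) |
          MeasurableSpace.comap (fun ω i => env i ω) MeasurableSpace.pi]
        =ᵐ[μ] fun ω => ∏ i ∈ Finset.range n, stepProb (env (x i) ω) (x (i + 1) - x i))
    -- the i.i.d. scenery, independent of the environment and of the walk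
    (sce : ℤ → Ω → ℝ) (hsce_meas : ∀ x, Measurable (sce x))
    (hsce_indep : iIndepFun (m := fun _ : ℤ => (inferInstance : MeasurableSpace ℝ)) sce μ)
    (hsce_ident : ∀ x, IdentDistrib (sce x) (sce 0) μ μ)
    (hsce_env_walk_indep :
      IndepFun (fun ω => (fun x : ℤ => sce x ω))
        (fun ω => ((fun i : ℤ => env i ω), (fun n : ℕ => X n ω))) μ)
    -- `a := ess sup ξ₀ < ∞`
    (a : ℝ) (ha : a = essSup (fun ω => sce 0 ω) μ) (ha_fin : ∀ᵐ ω ∂μ, sce 0 ω ≤ a)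
    -- heavy negative tails: `Q{ξ₀⁻ > λ} ≥ 1/(log λ)^α` for all large `λ`
    (α : ℝ) (hα : 0 < α) (hα2 : α < 2) (lam₀ : ℝ) (hlam₀ : 1 < lam₀)
    (htail : ∀ lam : ℝ, lam₀ ≤ lam →
      1 / Real.log lam ^ (α : ℝ) ≤ (μ {ω | lam < max (-(sce 0 ω)) 0}).toReal) :
    ∀ ε' : ℝ, 0 < ε' → ∀ᵐ ω ∂μ,
      Tendsto (fun n : ℕ =>
          (n : ℝ) ^ (-2 / α + ε' : ℝ) * ∑ i ∈ Finset.range (n + 1), sce (X i ω) ω)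
        atTop atBot := by
  intro ε' _
  obtain ⟨θ, hθ, hθα⟩ := exists_between ((one_lt_div hα).mpr hα2)
  have henv := IsSinaiEnv.of_identDistrib henv_meas henv_indep henv_ident hδ0 (henv_ell 0) henv_mean
  have hX : IsWalkInEnv env X μ := ⟨henv_meas, hX_meas, hX0, hquenched⟩
  have hsce := IsHeavyTailedScenery.of_identDistrib hsce_meas hsce_indep hsce_ident htail
  have hsce_le : ∀ x, ∀ᵐ ω ∂μ, sce x ω ≤ a :=
    fun x ↦ (hsce_ident x).symm.ae_snd measurableSet_Iic ha_fin
  filter_upwards [stmt2_general henv hX hsce hsce_le hα.le hθ ((lt_div_iff₀ hα).mp hθα)] with ω hω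
  exact tendsto_rpow_mul_atBot_of_le_neg_exp hθ hω _
end

section
/- For every δ > 0 there exists j₀ such that for all j ≥ j₀ and all integers p with 0 ≤ p ≤ M(j): ∑_{i=p}^{M(j)} γ_i(j)^δ ≤ (1 + 2/δ) · γ_p(j)^δ. -/
open Filter

/-- `γ_i(j) := j^((1-α)^i)`. -/
noncomputable def gamScale (α : ℝ) (j : ℝ) (i : ℕ) : ℝ := j ^ ((1 - α) ^ i)

/-- `M(j) := inf{n ≥ 0 : γ_n(j) ≤ (log log j)^((1-α)/(2+ε'))}`. -/
noncomputable def bigM (α ε' : ℝ) (j : ℝ) : ℕ :=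
  sInf {n : ℕ | gamScale α j n ≤ (Real.log (Real.log j)) ^ ((1 - α) / (2 + ε'))}

/-! Consecutive terms satisfy `γ_{i+1}(j)^δ = γ_i(j)^(-αδ) γ_i(j)^δ`. For `i < M(j)` the scale
`γ_i(j)` exceeds the threshold defining `M(j)`, and this threshold tends to infinity with `j`. Hence
the ratio `γ_i(j)^(-αδ)` is small uniformly in `i < M(j)`, and the sum is dominated by a geometric
series whose ratio can be made as small as desired. -/

theorem one_sub_mul_sum_Icc_le_of_succ_le_mul {R : Type*} [Ring R] [PartialOrder R]
    [IsOrderedRing R] {u : ℕ → R} {r : R} {p n : ℕ} (hpn : p ≤ n) (hr : 0 ≤ r) (hn : 0 ≤ u n)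
    (hu : ∀ i ∈ Finset.Ico p n, u (i + 1) ≤ r * u i) :
    (1 - r) * ∑ i ∈ Finset.Icc p n, u i ≤ u p := by
  induction hpn using Nat.decreasingInduction with
  | self =>
    rw [Finset.Icc_self, Finset.sum_singleton, sub_mul, one_mul]
    exact sub_le_self _ (mul_nonneg hr hn)
  | of_succ k hk ih =>
    have htail : (1 - r) * ∑ i ∈ Finset.Icc (k + 1) n, u i ≤ r * u k :=
      (ih fun i hi => hu i (Finset.Ico_subset_Ico_left k.le_succ hi)).trans
        (hu k (Finset.left_mem_Ico.2 hk))
    rw [← Finset.insert_Icc_add_one_left_eq_Icc hk.le, Finset.sum_insert (by simp), mul_add]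
    calc (1 - r) * u k + (1 - r) * ∑ i ∈ Finset.Icc (k + 1) n, u i
        ≤ (1 - r) * u k + r * u k := add_le_add_right htail _
      _ = u k := by rw [← add_mul, sub_add_cancel, one_mul]

section Scales

variable {α ε' δ j T : ℝ} {i : ℕ}

theorem gamScale_pos (hj : 0 < j) : 0 < gamScale α j i :=
  Real.rpow_pos_of_pos hj _

theorem gamScale_succ (hj : 0 ≤ j) : gamScale α j (i + 1) = gamScale α j i ^ (1 - α) := by
  rw [gamScale, gamScale, ← Real.rpow_mul hj, pow_succ]

theorem gamScale_succ_rpow (hj : 0 < j) :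
    gamScale α j (i + 1) ^ δ = gamScale α j i ^ (-(α * δ)) * gamScale α j i ^ δ := by
  have hγ : 0 < gamScale α j i := gamScale_pos hj
  rw [gamScale_succ hj.le, ← Real.rpow_mul hγ.le, ← Real.rpow_add hγ]
  ring_nf

theorem gamScale_succ_rpow_le (hj : 0 < j) (hαδ : 0 ≤ α * δ) (hT : 0 < T)
    (hTγ : T ≤ gamScale α j i) :
    gamScale α j (i + 1) ^ δ ≤ T ^ (-(α * δ)) * gamScale α j i ^ δ := by
  have hγ : 0 < gamScale α j i := gamScale_pos hj
  rw [gamScale_succ_rpow hj]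
  gcongr ?_ * _
  exact Real.rpow_le_rpow_of_nonpos hT hTγ (neg_nonpos.2 hαδ)

theorem lt_gamScale_of_lt_bigM (hi : i < bigM α ε' j) :
    Real.log (Real.log j) ^ ((1 - α) / (2 + ε')) < gamScale α j i :=
  not_le.1 (Nat.notMem_of_lt_sInf hi)

end Scales

theorem tendsto_log_log_rpow_atTop {κ : ℝ} (hκ : 0 < κ) :
    Tendsto (fun j : ℝ => Real.log (Real.log j) ^ κ) atTop atTop :=
  (tendsto_rpow_atTop hκ).comp (Real.tendsto_log_atTop.comp Real.tendsto_log_atTop)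

theorem eventually_gamScale_succ_rpow_le_mul {α ε' δ r : ℝ} (hα : 0 < α)
    (hκ : 0 < (1 - α) / (2 + ε')) (hδ : 0 < δ) (hr : 0 < r) :
    ∀ᶠ j : ℝ in atTop, ∀ i < bigM α ε' j,
      gamScale α j (i + 1) ^ δ ≤ r * gamScale α j i ^ δ := by
  have hT := tendsto_log_log_rpow_atTop hκ
  have hratio := (tendsto_rpow_neg_atTop (mul_pos hα hδ)).comp hT
  filter_upwards [eventually_gt_atTop 0, hT.eventually_gt_atTop 0, hratio.eventually_le_const hr]
    with j hj hTpos hTr i hi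
  have hγ : 0 < gamScale α j i := gamScale_pos hj
  calc gamScale α j (i + 1) ^ δ
      ≤ (Real.log (Real.log j) ^ ((1 - α) / (2 + ε'))) ^ (-(α * δ)) * gamScale α j i ^ δ :=
        gamScale_succ_rpow_le hj (mul_pos hα hδ).le hTpos (lt_gamScale_of_lt_bigM hi).le
    _ ≤ r * gamScale α j i ^ δ := by gcongr; exact hTr

theorem stmt7_general {α ε' δ C : ℝ} (hα : 0 < α) (hκ : 0 < (1 - α) / (2 + ε')) (hδ : 0 < δ)
    (hC : 1 < C) :
    ∀ᶠ j : ℝ in atTop, ∀ p ≤ bigM α ε' j,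
      ∑ i ∈ Finset.Icc p (bigM α ε' j), gamScale α j i ^ δ ≤ C * gamScale α j p ^ δ := by
  have hr : 0 < 1 - C⁻¹ := sub_pos.2 (inv_lt_one_of_one_lt₀ hC)
  filter_upwards [eventually_gt_atTop 0, eventually_gamScale_succ_rpow_le_mul hα hκ hδ hr]
    with j hj hdecay p hp
  have hsum := one_sub_mul_sum_Icc_le_of_succ_le_mul (u := fun i => gamScale α j i ^ δ) hp hr.le
    (Real.rpow_nonneg (gamScale_pos hj).le δ) fun i hi => hdecay i (Finset.mem_Ico.1 hi).2
  rwa [sub_sub_cancel, inv_mul_le_iff₀ (one_pos.trans hC)] at hsum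

/-- For every `δ > 0` there exists `j₀` such that for all `j ≥ j₀` and all
`0 ≤ p ≤ M(j)`: `∑_{i=p}^{M(j)} γ_i(j)^δ ≤ (1 + 2/δ) · γ_p(j)^δ`. -/
theorem stmt7 (ε ε' α c₄ : ℝ) (hε : 0 < ε) (hε' : ε' = min (1 / 35) (ε / 2))
    (hα0 : 0 < α) (hα1 : α < 1)
    (hβ : 0 < (1 - α) ^ 2 * (2 + ε) - (2 + ε'))
    (hβ' : 0 < ε' / 2 - α)
    (hc₄0 : 0 < c₄) (hc₄1 : c₄ < 1 / 6) :
    ∀ δ : ℝ, 0 < δ → ∃ j₀ : ℕ, ∀ j : ℕ, j₀ ≤ j →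
      ∀ p : ℕ, p ≤ bigM α ε' (j : ℝ) →
        ∑ i ∈ Finset.Icc p (bigM α ε' (j : ℝ)), gamScale α (j : ℝ) i ^ δ
          ≤ (1 + 2 / δ) * gamScale α (j : ℝ) p ^ δ := by
  intro δ hδ
  have hκ : 0 < (1 - α) / (2 + ε') := div_pos (by linarith) (by linarith)
  have hC : 1 < 1 + 2 / δ := lt_add_of_pos_right 1 (by positivity)
  exact eventually_atTop.1
    (tendsto_natCast_atTop_atTop.eventually (stmt7_general hα0 hκ hδ hC))
end
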